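/- Let h : ℝ → ℝ be upper semicontinuous and weakly lower semicontinuous at every point c ∈ ℝ, with h(y) ≥ 0 for all y, and suppose the zero set {y ∈ ℝ : h(y) = 0} is dense in ℝ. If h(α) > 0, then for every r with 0 < r < h(α) and every ε > 0 there exists α' ∈ ℝ with |α' − α| < ε and h(α') = r. -/

import Mathlib

open Filter Set Topology

/-!
Take a zero `β` of `h` slightly to the right of `α` and let `c` be the supremum of the points
`x ∈ [α, β]` with `h x ≥ r`. Upper semicontinuity gives `h c ≥ r`, so `c < β`; if `h c > r`, weak
lower semicontinuity from the right produces points of `(c, β)` where `h > r`, contradicting the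
choice of `c`. Hence `h c = r`.

The limsups here are real-valued, so a limsup along a filter on which `h` is unbounded above has
the junk value `0`, and the upper semicontinuity hypothesis says nothing at such a point.
However, weak lower semicontinuity at `α` with `h α > 0` makes both one-sided limsups at `α`
positive, hence genuine, so `h` is bounded above on a neighbourhood of `α`
(`isBoundedUnder_of_limsup_pos`). The argument takes place inside that neighbourhood.
-/

/-- A positive real limsup is not the junk value `sInf ∅ = 0`. -/
lemma isBoundedUnder_of_limsup_pos {h : ℝ → ℝ} {l : Filter ℝ} (hl : 0 < limsup h l) :
    ∃ M, ∀ᶠ x in l, h x ≤ M := by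
  by_contra! hne
  have hempty : {a | ∀ᶠ x in l, h x ≤ a} = ∅ := by
    ext a
    simpa using hne a
  rw [limsup_eq, hempty, Real.sInf_empty] at hl
  exact lt_irrefl _ hl

/-- Abstract form of Corollary 2.4: if `h : ℝ → ℝ` is upper semicontinuous,
weakly lower semicontinuous at every point, nonnegative, and vanishes on a dense
set, then for any `α` with `h α > 0`, any `0 < r < h α` is attained by `h`
arbitrarily close to `α`. -/
theorem usc_weakly_lsc_dense_zero_attains
    (h : ℝ → ℝ)
    (husc : ∀ c : ℝ, Filter.limsup h (𝓝[≠] c) ≤ h c)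
    (hwlsc : ∀ c : ℝ,
      min (Filter.limsup h (𝓝[>] c)) (Filter.limsup h (𝓝[<] c)) ≥ h c)
    (hnonneg : ∀ y : ℝ, 0 ≤ h y)
    (hdense : Dense {y : ℝ | h y = 0}) :
    ∀ α : ℝ, 0 < h α → ∀ r : ℝ, 0 < r → r < h α → ∀ ε : ℝ, 0 < ε →
      ∃ α' : ℝ, |α' - α| < ε ∧ h α' = r := by
  intro α hα r hr hrα ε hε
  obtain ⟨M₁, hM₁⟩ := isBoundedUnder_of_limsup_pos
    (hα.trans_le ((hwlsc α).le.trans (min_le_left _ _)))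
  obtain ⟨M₂, hM₂⟩ := isBoundedUnder_of_limsup_pos
    (hα.trans_le ((hwlsc α).le.trans (min_le_right _ _)))
  obtain ⟨M, hM⟩ : ∃ M, ∀ᶠ x in 𝓝 α, h x ≤ M := by
    refine ⟨max (h α) (max M₁ M₂), ?_⟩
    rw [eventually_nhdsWithin_iff] at hM₁ hM₂
    filter_upwards [hM₁, hM₂] with x h₁ h₂
    rcases lt_trichotomy x α with hx | rfl | hx
    · exact (h₂ hx).trans ((le_max_right _ _).trans (le_max_right _ _))
    · exact le_max_left _ _
    · exact (h₁ hx).trans ((le_max_left _ _).trans (le_max_right _ _))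
  obtain ⟨δ, hδ, hball⟩ := Metric.eventually_nhds_iff_ball.1 hM
  obtain ⟨β, hβ0, hαβ, hβ⟩ : ∃ β, h β = 0 ∧ α < β ∧ β < α + min δ ε := by
    obtain ⟨β, hβ0, h1, h2⟩ := hdense.exists_between
      (show α < α + min δ ε from lt_add_of_pos_right _ (lt_min hδ hε))
    exact ⟨β, hβ0, h1, h2⟩
  have hβδ : β < α + δ := hβ.trans_le (by gcongr; exact min_le_left _ _)
  have hβε : β < α + ε := hβ.trans_le (by gcongr; exact min_le_right _ _)
  have hbdd : ∀ c ∈ Icc α β, ∀ᶠ x in 𝓝 c, h x ≤ M := by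
    intro c hc
    have hmem : c ∈ Metric.ball α δ := by
      rw [Metric.mem_ball, Real.dist_eq, abs_lt]
      constructor <;> linarith [hc.1, hc.2]
    exact (Metric.isOpen_ball.eventually_mem hmem).mono hball
  set S : Set ℝ := {x | x ∈ Icc α β ∧ r ≤ h x}
  have hαS : α ∈ S := ⟨⟨le_rfl, hαβ.le⟩, hrα.le⟩
  have hSb : BddAbove S := ⟨β, fun x hx => hx.1.2⟩
  have hlub : IsLUB S (sSup S) := isLUB_csSup ⟨α, hαS⟩ hSb
  set c := sSup S
  have hc : c ∈ Icc α β := ⟨hlub.1 hαS, hlub.2 fun x hx => hx.1.2⟩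
  refine ⟨c, ?_, le_antisymm ?_ ?_⟩
  · rw [abs_lt]
    constructor <;> linarith [hc.1, hc.2]
  · by_contra! hrc
    have hcβ : c < β := lt_of_le_of_ne hc.2 fun e => by
      rw [e, hβ0] at hrc
      exact lt_asymm hr hrc
    have hfreq : ∃ᶠ x in 𝓝[>] c, r < h x :=
      frequently_lt_of_lt_limsup
        (isCoboundedUnder_le_of_le (𝓝[>] c) hnonneg)
        (hrc.trans_le ((hwlsc c).le.trans (min_le_left _ _)))
    obtain ⟨x, hrx, hcx, hxβ⟩ := (hfreq.and_eventually (Ioo_mem_nhdsGT hcβ)).exists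
    exact absurd (hlub.1 ⟨⟨hc.1.trans hcx.le, hxβ.le⟩, hrx.le⟩) (not_le.2 hcx)
  · by_contra! hcr
    have hev : ∀ᶠ x in 𝓝[≠] c, h x < r :=
      eventually_lt_of_limsup_lt ((husc c).trans_lt hcr)
        ⟨M, eventually_map.2 ((hbdd c hc).filter_mono nhdsWithin_le_nhds)⟩
    have hev' : ∀ᶠ x in 𝓝 c, h x < r := by
      rw [eventually_nhdsWithin_iff] at hev
      filter_upwards [hev] with x hx
      rcases eq_or_ne x c with rfl | hne
      · exact hcr
      · exact hx hne
    obtain ⟨x, hxS, hxr⟩ := ((hlub.frequently_mem ⟨α, hαS⟩).and_eventually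
      (hev'.filter_mono nhdsWithin_le_nhds)).exists
    exact absurd hxS.2 (not_le.2 hxr)
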